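/- arXiv:2502.03008 — 4 statements merged into one kernel-verified Lean document; each statement's English description precedes it below -/
import Mathlib

section
/- Let M ∈ ℝ^{N_μ×N_μ} be positive semidefinite and let M^{1/2} denote its positive semidefinite square root. Then for every matrix z ∈ ℝ^{N_x×N_μ} one has Σ_{i,j=1}^{N_x} Σ_{k,ℓ=0}^{N_μ−1} z_{jk} D^{xx}_{ji} z_{iℓ} M_{kℓ} = − Σ_{i=1}^{N_x} Σ_{ℓ=0}^{N_μ−1} ( Σ_{j=1}^{N_x} Σ_{k=0}^{N_μ−1} D^+_{ji} z_{jk} M^{1/2}_{kℓ} )², i.e. trace(z^⊤ D^{xx} z M) = −‖D^+ z M^{1/2}‖_F². -/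
/-!
The identity is an instance of the factorization `D⁺ (D⁺)ᵀ = -D^{xx}` (`Dplus_mul_transpose`).
With `S = M^{1/2}` symmetric, the right-hand side is `-tr(Aᵀ A)` for `A = (D⁺)ᵀ z S`; cyclicity of
the trace turns `tr(Aᵀ A)` into `tr(zᵀ D⁺ (D⁺)ᵀ z S S) = -tr(zᵀ D^{xx} z M)`.
-/

open Finset

/-- The periodic second-difference stabilization matrix `D^{xx}` with
`D^{xx}_{j,j} = -1/Δx`, `D^{xx}_{j,j±1} = 1/(2Δx)` (indices cyclic). -/
noncomputable def Dxx (Nx : ℕ) [NeZero Nx] (Δx : ℝ) : Matrix (Fin Nx) (Fin Nx) ℝ :=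
  Matrix.of fun j i =>
    if i = j then -(1 / Δx)
    else if i = j + 1 then 1 / (2 * Δx)
    else if j = i + 1 then 1 / (2 * Δx)
    else 0

/-- The periodic forward-difference matrix `D^+` with
`D^+_{j,j} = -1/√(2Δx)`, `D^+_{j,j+1} = 1/√(2Δx)` (indices cyclic). -/
noncomputable def Dplus (Nx : ℕ) [NeZero Nx] (Δx : ℝ) : Matrix (Fin Nx) (Fin Nx) ℝ :=
  Matrix.of fun j i =>
    if i = j then -(1 / Real.sqrt (2 * Δx))
    else if i = j + 1 then 1 / Real.sqrt (2 * Δx)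
    else 0

/-- The factorization of the stabilization matrix. The bound `3 ≤ Nx` makes `j`, `j + 1`, `j + 2`
distinct modulo `Nx`, so that the two off-diagonal bands of `D^{xx}` do not meet. -/
lemma Dplus_mul_transpose (Nx : ℕ) [NeZero Nx] (hNx : 3 ≤ Nx) (Δx : ℝ) (hΔx : 0 < Δx) :
    Dplus Nx Δx * (Dplus Nx Δx).transpose = -Dxx Nx Δx := by
  have h1 : ∀ j : Fin Nx, j ≠ j + 1 := by
    intro j h
    have h0 : (1 : Fin Nx) = 0 := by simpa using h
    have := congrArg Fin.val h0
    simp [Nat.mod_eq_of_lt (show 1 < Nx by omega)] at this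
  have h2 : ∀ j : Fin Nx, j ≠ j + 1 + 1 := by
    intro j h
    have h0 : (1 + 1 : Fin Nx) = 0 := by simpa [add_assoc] using h
    have := congrArg Fin.val h0
    simp [Fin.val_add, Nat.mod_eq_of_lt (show 2 < Nx by omega)] at this
  have hc : 1 / Real.sqrt (2 * Δx) * (1 / Real.sqrt (2 * Δx)) = 1 / (2 * Δx) := by
    rw [div_mul_div_comm, Real.mul_self_sqrt (by positivity), one_mul]
  have hD : ∀ j l : Fin Nx, Dplus Nx Δx j l =
      1 / Real.sqrt (2 * Δx) * ((if l = j + 1 then 1 else 0) - (if l = j then 1 else 0)) := by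
    intro j l
    simp only [Dplus, Matrix.of_apply]
    by_cases hl : l = j
    · simp [hl, h1 j]
    · simp [hl]
  ext j i
  have hsum : (Dplus Nx Δx * (Dplus Nx Δx).transpose) j i =
      1 / (2 * Δx) * ∑ l : Fin Nx, ((if l = j + 1 then 1 else 0) - (if l = j then 1 else 0)) *
        ((if l = i + 1 then 1 else 0) - (if l = i then 1 else 0)) := by
    rw [Matrix.mul_apply, mul_sum]
    refine sum_congr rfl fun l _ => ?_
    rw [Matrix.transpose_apply, hD, hD, ← hc]
    ring
  rw [hsum]
  simp only [sub_mul, sum_sub_distrib, ite_mul, one_mul, zero_mul, sum_ite_eq', mem_univ,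
    if_true, Matrix.neg_apply, Dxx, Matrix.of_apply, add_left_inj]
  by_cases hij : i = j
  · subst hij
    simp [h1 i, (h1 i).symm]
    field_simp
    norm_num
  · have hji : j ≠ i := fun h => hij h.symm
    by_cases ha : i = j + 1
    · subst ha
      simp [hji, hij, h2 j]
    · by_cases hb : j = i + 1
      · simp [hb, h1 i, (h1 i).symm, h2 i, (h2 i).symm]
      · simp [hij, hji, ha, Ne.symm ha, hb]

/-- For a positive semidefinite matrix `M` with positive semidefinite square root
`sqrtM`, one has `trace(zᵀ D^{xx} z M) = -‖D^+ z M^{1/2}‖_F²`. -/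
theorem stmt_4 (Nx Nμ : ℕ) [NeZero Nx] (hNx : 3 ≤ Nx) (Δx : ℝ) (hΔx : 0 < Δx)
    (M sqrtM : Matrix (Fin Nμ) (Fin Nμ) ℝ)
    (hM : M.PosSemidef) (hsqrtM : sqrtM.PosSemidef) (hsq : sqrtM * sqrtM = M)
    (z : Fin Nx → Fin Nμ → ℝ) :
    ∑ i : Fin Nx, ∑ j : Fin Nx, ∑ k : Fin Nμ, ∑ ℓ : Fin Nμ,
        z j k * Dxx Nx Δx j i * z i ℓ * M k ℓ
      = - ∑ i : Fin Nx, ∑ ℓ : Fin Nμ,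
          (∑ j : Fin Nx, ∑ k : Fin Nμ, Dplus Nx Δx j i * z j k * sqrtM k ℓ) ^ 2 := by
  have hS : sqrtM.transpose = sqrtM := by
    have h := hsqrtM.isHermitian.eq
    rwa [Matrix.conjTranspose_eq_transpose_of_trivial] at h
  set Z : Matrix (Fin Nx) (Fin Nμ) ℝ := Matrix.of z with hZ
  set A := (Dplus Nx Δx).transpose * Z * sqrtM with hA
  have hR : ∑ i : Fin Nx, ∑ ℓ : Fin Nμ,
      (∑ j : Fin Nx, ∑ k : Fin Nμ, Dplus Nx Δx j i * z j k * sqrtM k ℓ) ^ 2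
      = (A.transpose * A).trace := by
    simp only [Matrix.trace, Matrix.diag_apply, Matrix.mul_apply, Matrix.transpose_apply]
    rw [sum_comm]
    refine sum_congr rfl fun ℓ _ => sum_congr rfl fun i _ => ?_
    have : A i ℓ = ∑ j : Fin Nx, ∑ k : Fin Nμ, Dplus Nx Δx j i * z j k * sqrtM k ℓ := by
      simp only [hA, hZ, Matrix.mul_apply, Matrix.transpose_apply, Matrix.of_apply, sum_mul]
      rw [sum_comm]
    rw [this, sq]
  have hL : ∑ i : Fin Nx, ∑ j : Fin Nx, ∑ k : Fin Nμ, ∑ ℓ : Fin Nμ,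
      z j k * Dxx Nx Δx j i * z i ℓ * M k ℓ
      = (Z.transpose * Dxx Nx Δx * Z * M.transpose).trace := by
    simp only [hZ, Matrix.trace, Matrix.diag_apply, Matrix.mul_apply, Matrix.transpose_apply,
      Matrix.of_apply, sum_mul]
    -- The trace unfolds to the summation order `k, ℓ, i, j`.
    calc _ = ∑ i : Fin Nx, ∑ k : Fin Nμ, ∑ ℓ : Fin Nμ, ∑ j : Fin Nx,
          z j k * Dxx Nx Δx j i * z i ℓ * M k ℓ := by
          refine sum_congr rfl fun i _ => ?_
          rw [sum_comm]
          exact sum_congr rfl fun k _ => sum_comm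
      _ = _ := by
          rw [sum_comm]
          exact sum_congr rfl fun k _ => sum_comm
  have hMt : M.transpose = sqrtM * sqrtM := by
    rw [← hsq, Matrix.transpose_mul, hS]
  have hAA : A.transpose * A
      = sqrtM * (Z.transpose * (Dplus Nx Δx * (Dplus Nx Δx).transpose) * Z * sqrtM) := by
    simp only [hA, Matrix.transpose_mul, Matrix.transpose_transpose, hS, Matrix.mul_assoc]
  rw [hL, hR, hMt, hAA, Dplus_mul_transpose Nx hNx Δx hΔx, Matrix.trace_mul_comm sqrtM]
  simp only [Matrix.mul_neg, Matrix.neg_mul, Matrix.trace_neg, neg_neg, Matrix.mul_assoc]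
end

section
/- Suppose σ = 0, v^0_{jk} = 1 for all j and k, and B^0_j > 0 for all j, and suppose (v^1, B^1) satisfies the advection-form fully discrete scheme: v^1_{jk} = v^0_{jk} − Δt Σ_{i,ℓ} D^x_{ji} v^0_{iℓ} A_{kℓ} + Δt Σ_{i,ℓ} D^{xx}_{ji} v^0_{iℓ} |A|_{kℓ} + σΔt(√2 δ_{k0} − v^1_{jk}) − ((B^1_j − B^0_j)/B^0_j) v^1_{jk} − Δt Σ_{i,ℓ} (v^0_{jℓ}/B^0_j) D^x_{ji} B^0_i A_{kℓ}, and B^1_j = B^0_j + σΔt B^1_j(√2 v^1_{j0} − 2). Then B^1_j = B^0_j for all j, and setting u^n_{jk} = B^n_j v^n_{jk} one has u^1_{jk} = u^0_{jk} − Δt Σ_{i=1}^{N_x} Σ_{ℓ=0}^{N_μ−1} D^x_{ji} u^0_{iℓ} A_{kℓ} for all j,k; i.e. the scheme reduces to the explicit Euler centered-difference discretization of the advection equation. -/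
/-!
Both stencils annihilate constants: the rows of `Dx` and `Dxx` sum to zero (`sum_Dx`, `sum_Dxx`),
because for `3 ≤ Nx` the cyclic neighbours `j + 1`, `j - 1` and the node `j` itself are distinct.
Hence, for `v⁰ ≡ 1`, the transport and stabilization terms of the scheme vanish.
As `σ = 0`, the energy equation gives `B¹ = B⁰`, and the only surviving term is the one
carrying `D^x B⁰`. Multiplying by `B⁰_j > 0` cancels the factor `1 / B⁰_j` in it and leaves the
Euler step for `u = B v`.
-/

open Finset

/-- The periodic centered-difference stencil matrix `D^x` with
`D^x_{j,j+1} = 1/(2Δx)`, `D^x_{j,j-1} = -1/(2Δx)` (indices cyclic). -/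
noncomputable def Dx (Nx : ℕ) [NeZero Nx] (Δx : ℝ) : Matrix (Fin Nx) (Fin Nx) ℝ :=
  Matrix.of fun j i =>
    if i = j + 1 then 1 / (2 * Δx)
    else if j = i + 1 then -(1 / (2 * Δx))
    else 0

theorem one_ne_zero_fin {Nx : ℕ} [NeZero Nx] (hNx : 3 ≤ Nx) : (1 : Fin Nx) ≠ 0 := by
  obtain ⟨n, rfl⟩ := Nat.exists_eq_add_of_le' hNx
  simp

theorem one_add_one_ne_zero_fin {Nx : ℕ} [NeZero Nx] (hNx : 3 ≤ Nx) :
    (1 : Fin Nx) + 1 ≠ 0 := by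
  obtain ⟨n, rfl⟩ := Nat.exists_eq_add_of_le' hNx
  simp [Fin.ext_iff, Fin.val_add, Nat.mod_eq_of_lt (show 2 < n + 3 by omega)]

/-- The two nonzero entries of a row of `Dx` do not collide when `3 ≤ Nx`, so they cancel. -/
theorem sum_Dx {Nx : ℕ} [NeZero Nx] (hNx : 3 ≤ Nx) (Δx : ℝ) (j : Fin Nx) :
    ∑ i, Dx Nx Δx j i = 0 := by
  have h2 := one_add_one_ne_zero_fin hNx
  have h : ∀ i, Dx Nx Δx j i = (if i = j + 1 then 1 / (2 * Δx) else 0)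
      + (if i = j - 1 then -(1 / (2 * Δx)) else 0) := by
    intro i
    have e : j = i + 1 ↔ i = j - 1 := by rw [eq_sub_iff_add_eq, eq_comm]
    have hne : j + 1 ≠ j - 1 := fun h => h2 (by
      have h' := eq_sub_iff_add_eq.mp h
      rwa [add_assoc, add_eq_left] at h')
    simp only [Dx, Matrix.of_apply, e]
    split_ifs with h₁ h₃ <;> first | exact absurd (h₁.symm.trans h₃) hne | simp
  simp [h, Finset.sum_add_distrib]

/-- The three nonzero entries of a row of `Dxx` do not collide when `3 ≤ Nx`, so they cancel. -/
theorem sum_Dxx {Nx : ℕ} [NeZero Nx] (hNx : 3 ≤ Nx) (Δx : ℝ) (j : Fin Nx) :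
    ∑ i, Dxx Nx Δx j i = 0 := by
  have h1 := one_ne_zero_fin hNx
  have h2 := one_add_one_ne_zero_fin hNx
  have h : ∀ i, Dxx Nx Δx j i = (if i = j then -(1 / Δx) else 0)
      + (if i = j + 1 then 1 / (2 * Δx) else 0)
      + (if i = j - 1 then 1 / (2 * Δx) else 0) := by
    intro i
    have e : j = i + 1 ↔ i = j - 1 := by rw [eq_sub_iff_add_eq, eq_comm]
    have hne : j + 1 ≠ j - 1 := fun h => h2 (by
      have h' := eq_sub_iff_add_eq.mp h
      rwa [add_assoc, add_eq_left] at h')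
    have hne1 : j ≠ j + 1 := fun h => h1 (by rwa [eq_comm, add_eq_left] at h)
    have hne2 : j ≠ j - 1 := fun h => h1 (by
      have h' := eq_sub_iff_add_eq.mp h
      rwa [add_eq_left] at h')
    simp only [Dxx, Matrix.of_apply, e]
    by_cases a : i = j
    · subst a; simp only [if_true, if_neg hne1, if_neg hne2, add_zero]
    · by_cases b : i = j + 1
      · subst b; simp only [if_neg a, if_true, if_neg hne, add_zero, zero_add]
      · simp only [if_neg a, if_neg b, zero_add]
  simp only [h, Finset.sum_add_distrib, Finset.sum_ite_eq', Finset.mem_univ,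
    if_true]
  ring

/-- A stencil with vanishing row sums annihilates constant fields in the scheme's double sums. -/
theorem sum_mul_one_mul_eq_zero {Nx Nμ : ℕ} {d : Fin Nx → ℝ} (hd : ∑ i, d i = 0)
    {v : Fin Nx → Fin Nμ → ℝ} (hv : ∀ j k, v j k = 1) (a : Fin Nμ → ℝ) :
    ∑ i, ∑ ℓ, d i * v i ℓ * a ℓ = 0 := by
  simp only [hv, mul_one, ← Finset.mul_sum, ← Finset.sum_mul, hd, zero_mul]

/-- With `σ = 0` and spatially constant initial data `v⁰ ≡ 1`, the advection
form of the fully discrete multiplicative scheme keeps the internal energy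
constant and reduces, for `u = B v`, to the explicit Euler centered-difference
discretization of the advection equation. -/
theorem stmt_8 (Nx Nμ : ℕ) [NeZero Nx] [NeZero Nμ] (hNx : 3 ≤ Nx)
    (Δx Δt σ : ℝ) (hΔx : 0 < Δx) (hΔt : 0 < Δt) (hσ : σ = 0)
    (A absA : Matrix (Fin Nμ) (Fin Nμ) ℝ) (hA : A.IsSymm)
    (habs : absA.PosSemidef) (habs2 : absA * absA = A * A)
    (B0 B1 : Fin Nx → ℝ) (v0 v1 : Fin Nx → Fin Nμ → ℝ)
    (hv0 : ∀ j k, v0 j k = 1) (hB0 : ∀ j, 0 < B0 j)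
    (hscheme : ∀ j k, v1 j k = v0 j k
        - Δt * ∑ i : Fin Nx, ∑ ℓ : Fin Nμ, Dx Nx Δx j i * v0 i ℓ * A k ℓ
        + Δt * ∑ i : Fin Nx, ∑ ℓ : Fin Nμ, Dxx Nx Δx j i * v0 i ℓ * absA k ℓ
        + σ * Δt * (Real.sqrt 2 * (if k = 0 then (1 : ℝ) else 0) - v1 j k)
        - ((B1 j - B0 j) / B0 j) * v1 j k
        - Δt * ∑ i : Fin Nx, ∑ ℓ : Fin Nμ,
            (v0 j ℓ / B0 j) * Dx Nx Δx j i * B0 i * A k ℓ)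
    (hB : ∀ j, B1 j = B0 j + σ * Δt * B1 j * (Real.sqrt 2 * v1 j 0 - 2)) :
    (∀ j, B1 j = B0 j) ∧
      ∀ j k, B1 j * v1 j k = B0 j * v0 j k
        - Δt * ∑ i : Fin Nx, ∑ ℓ : Fin Nμ,
            Dx Nx Δx j i * (B0 i * v0 i ℓ) * A k ℓ := by
  subst hσ
  have hBB : ∀ j, B1 j = B0 j := fun j => by simpa using hB j
  refine ⟨hBB, fun j k => ?_⟩
  have hb := (hB0 j).ne'
  have h := hscheme j k
  rw [sum_mul_one_mul_eq_zero (sum_Dx hNx Δx j) hv0 (A k),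
    sum_mul_one_mul_eq_zero (sum_Dxx hNx Δx j) hv0 (absA k), hBB j] at h
  -- Multiplication by `B0 j` cancels the factor `1 / B0 j` in the remaining sum.
  have hS : B0 j * ∑ i : Fin Nx, ∑ ℓ : Fin Nμ, (v0 j ℓ / B0 j) * Dx Nx Δx j i * B0 i * A k ℓ
      = ∑ i : Fin Nx, ∑ ℓ : Fin Nμ, Dx Nx Δx j i * (B0 i * v0 i ℓ) * A k ℓ := by
    simp only [Finset.mul_sum]
    refine Finset.sum_congr rfl fun i _ => Finset.sum_congr rfl fun ℓ _ => ?_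
    rw [hv0, hv0]
    field_simp
  rw [hBB j, h, ← hS]
  ring
end

section
/- Suppose B^0_j > 0 for all j and that (v^1, B^1) satisfies the g-update of the conservative fully discrete scheme: v^1_{jk} = v^0_{jk} − Δt Σ_{i,ℓ} (1/B^0_j) D^x_{ji} B^0_i v^0_{iℓ} A_{kℓ} + Δt Σ_{i,ℓ} (1/B^0_j) D^{xx}_{ji} B^0_i v^0_{iℓ} |A|_{kℓ} + σΔt (B^1_j/B^0_j)(√2 δ_{k0} − v^1_{jk}) − ((B^1_j − B^0_j)/B^0_j) v^1_{jk} for all j, k. If 0 < Δt ≤ Δx and σ ≥ 0, then with u^n_{jk} = B^n_j v^n_{jk} one has (1/2) Σ_{j,k} (u^1_{jk})² ≤ (1/2) Σ_{j,k} (u^0_{jk})² + σΔt Σ_{j,k} (B^1_j)² v^1_{jk} (√2 δ_{k0} − v^1_{jk}). -/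
/-!
With `λ = Δt/Δx`, multiplying the scheme by `B0 j` gives `u¹ = w + σ Δt B¹ (√2 δ - v¹)`, where
`w` is the explicit upwind step applied to `u⁰`:
`w_j = (1 - λ|A|) u⁰_j + (λ/2)(|A| - A) u⁰_{j+1} + (λ/2)(|A| + A) u⁰_{j-1}`.

Testing with `u¹` and using `u¹ w ≤ (u¹² + w²)/2`, it remains to see that `∑ w² ≤ ∑ (u⁰)²`.
The three coefficient matrices add up to the identity, and they are positive semidefinite: this is
where `λ ≤ 1` and the spectral bound on `A` enter (`abs_facts`). Such an
operator-valued convex combination satisfies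
`|C₁ a + C₂ b + C₃ c|² ≤ ⟨a, C₁ a⟩ + ⟨b, C₂ b⟩ + ⟨c, C₃ c⟩` (`convex_comb_sq_le`), and summing
over the periodic grid, where shifts do not change sums, recombines the right-hand side into
`∑ ⟨u⁰_j, (C₁ + C₂ + C₃) u⁰_j⟩ = ∑ (u⁰)²` (`upwind_sq_le`).
-/

open Finset

open Matrix in
/-- A positive semidefinite square root of `A²` is the absolute value of `A` given by the functional
calculus. The three matrices are therefore the images of `A` under `|x| - x`, `|x| + x` and
`1 - |x|`, which are nonnegative on the spectrum. -/
lemma abs_facts {n : ℕ} (A absA : Matrix (Fin n) (Fin n) ℝ) (hA : A.IsSymm)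
    (hspec : ∀ μ ∈ spectrum ℝ A, μ ∈ Set.Icc (-1 : ℝ) 1)
    (habs : absA.PosSemidef) (habs2 : absA * absA = A * A) :
    (absA - A).PosSemidef ∧ (absA + A).PosSemidef ∧ (1 - absA).PosSemidef := by
  open scoped MatrixOrder Matrix.Norms.L2Operator in
  have hsa : IsSelfAdjoint A := by
    rw [IsSelfAdjoint, star_eq_conjTranspose, conjTranspose_eq_transpose_of_trivial]
    exact hA
  have h0 : (0 : Matrix (Fin n) (Fin n) ℝ) ≤ cfc (fun x : ℝ => |x|) A :=
    cfc_nonneg fun x _ => abs_nonneg x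
  have hid : cfc (fun x : ℝ => x) A = A := cfc_id' ℝ A
  have hM : absA = cfc (fun x : ℝ => |x|) A := by
    rw [← CFC.mul_self_eq_mul_self_iff absA _ habs.nonneg h0, habs2,
      ← cfc_mul (fun x : ℝ => |x|) (fun x : ℝ => |x|) A]
    conv_lhs => rw [← hid, ← cfc_mul (fun x : ℝ => x) (fun x : ℝ => x) A]
    simp only [abs_mul_abs_self]
  refine ⟨?_, ?_, ?_⟩ <;> rw [← nonneg_iff_posSemidef]
  · have : absA - A = cfc (fun x : ℝ => |x| - x) A := by
      rw [cfc_sub (fun x : ℝ => |x|) (fun x : ℝ => x) A, hid, hM]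
    rw [this]
    exact cfc_nonneg fun x _ => sub_nonneg.2 (le_abs_self x)
  · have : absA + A = cfc (fun x : ℝ => |x| + x) A := by
      rw [cfc_add A (fun x : ℝ => |x|) (fun x : ℝ => x), hid, hM]
    rw [this]
    exact cfc_nonneg fun x _ => by linarith [neg_abs_le x]
  · have : 1 - absA = cfc (fun x : ℝ => 1 - |x|) A := by
      rw [cfc_sub (fun _ : ℝ => 1) (fun x : ℝ => |x|) A, cfc_const_one ℝ A, hM]
    rw [this]
    exact cfc_nonneg fun x hx => sub_nonneg.2 (abs_le.2 (hspec x hx))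

open Matrix in
/-- Young's inequality for the form of a positive semidefinite matrix: expand
`⟨x - y, C (x - y)⟩ ≥ 0`. -/
lemma PosSemidef_young {n : ℕ} {C : Matrix (Fin n) (Fin n) ℝ} (hC : C.PosSemidef)
    (x y : Fin n → ℝ) :
    2 * (x ⬝ᵥ C *ᵥ y) ≤ x ⬝ᵥ C *ᵥ x + y ⬝ᵥ C *ᵥ y := by
  have h := hC.dotProduct_mulVec_nonneg (x - y)
  have hsymm : y ⬝ᵥ C *ᵥ x = x ⬝ᵥ C *ᵥ y := by
    have hT : Cᵀ = C := by
      rw [← conjTranspose_eq_transpose_of_trivial]; exact hC.1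
    rw [dotProduct_mulVec, ← mulVec_transpose, hT, dotProduct_comm]
  simp only [star_trivial, mulVec_sub, sub_dotProduct, dotProduct_sub] at h
  linarith

open Matrix in
/-- Convexity of the squared norm for matrix weights: apply Young's inequality to each term of
`2 ⟨w, w⟩ = ∑ 2 ⟨w, Cᵢ xᵢ⟩` and absorb `∑ ⟨w, Cᵢ w⟩ = ⟨w, w⟩`. -/
lemma convex_comb_sq_le {n : ℕ} {C₁ C₂ C₃ : Matrix (Fin n) (Fin n) ℝ} (h₁ : C₁.PosSemidef)
    (h₂ : C₂.PosSemidef) (h₃ : C₃.PosSemidef) (hsum : C₁ + C₂ + C₃ = 1)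
    (a b c w : Fin n → ℝ) (hw : w = C₁ *ᵥ a + C₂ *ᵥ b + C₃ *ᵥ c) :
    w ⬝ᵥ w ≤ a ⬝ᵥ C₁ *ᵥ a + b ⬝ᵥ C₂ *ᵥ b + c ⬝ᵥ C₃ *ᵥ c := by
  have e1 : w ⬝ᵥ w = w ⬝ᵥ C₁ *ᵥ a + w ⬝ᵥ C₂ *ᵥ b + w ⬝ᵥ C₃ *ᵥ c := by
    rw [← dotProduct_add, ← dotProduct_add, ← hw]
  have e2 : w ⬝ᵥ w = w ⬝ᵥ C₁ *ᵥ w + w ⬝ᵥ C₂ *ᵥ w + w ⬝ᵥ C₃ *ᵥ w := by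
    rw [← dotProduct_add, ← dotProduct_add, ← add_mulVec, ← add_mulVec, hsum, one_mulVec]
  linarith [PosSemidef_young h₁ w a, PosSemidef_young h₂ w b, PosSemidef_young h₃ w c]

open Matrix in
/-- A periodic three-point scheme whose matrix coefficients are positive semidefinite and add up to
the identity is nonexpansive in `ℓ²`. -/
lemma upwind_sq_le {N n : ℕ} [NeZero N] {C₁ C₂ C₃ : Matrix (Fin n) (Fin n) ℝ}
    (h₁ : C₁.PosSemidef) (h₂ : C₂.PosSemidef) (h₃ : C₃.PosSemidef) (hsum : C₁ + C₂ + C₃ = 1)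
    (u w : Fin N → Fin n → ℝ)
    (hw : ∀ j, w j = C₁ *ᵥ u j + C₂ *ᵥ u (j + 1) + C₃ *ᵥ u (j - 1)) :
    ∑ j, w j ⬝ᵥ w j ≤ ∑ j, u j ⬝ᵥ u j := by
  calc ∑ j, w j ⬝ᵥ w j
      ≤ ∑ j, (u j ⬝ᵥ C₁ *ᵥ u j + u (j + 1) ⬝ᵥ C₂ *ᵥ u (j + 1)
          + u (j - 1) ⬝ᵥ C₃ *ᵥ u (j - 1)) :=
        Finset.sum_le_sum fun j _ => convex_comb_sq_le h₁ h₂ h₃ hsum _ _ _ _ (hw j)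
    _ = ∑ j, (u j ⬝ᵥ C₁ *ᵥ u j + u j ⬝ᵥ C₂ *ᵥ u j + u j ⬝ᵥ C₃ *ᵥ u j) := by
        simp only [Finset.sum_add_distrib]
        congr 1
        · congr 1
          exact Equiv.sum_comp (Equiv.addRight (1 : Fin N)) fun j => u j ⬝ᵥ C₂ *ᵥ u j
        · exact Equiv.sum_comp (Equiv.subRight (1 : Fin N)) fun j => u j ⬝ᵥ C₃ *ᵥ u j
    _ = ∑ j, u j ⬝ᵥ u j := by
        refine Finset.sum_congr rfl fun j _ => ?_
        rw [← dotProduct_add, ← dotProduct_add, ← add_mulVec, ← add_mulVec, hsum, one_mulVec]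

/-- From three grid points on, the cyclic neighbours of `j` are distinct from `j` and from each
other. -/
lemma neighbours_ne {N : ℕ} [NeZero N] (hN : 3 ≤ N) (j : Fin N) :
    j + 1 ≠ j ∧ j - 1 ≠ j ∧ j - 1 ≠ j + 1 := by
  have h1 : (1 : Fin N) ≠ 0 := by
    intro h
    have := congrArg Fin.val h
    rw [Fin.val_one', Nat.mod_eq_of_lt (by omega)] at this
    simp at this
  have h2 : (1 : Fin N) + 1 ≠ 0 := by
    intro h
    have := congrArg Fin.val h
    rw [Fin.val_add, Fin.val_one', Nat.mod_eq_of_lt (a := 1) (by omega),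
      Nat.mod_eq_of_lt (by omega)] at this
    simp at this
  refine ⟨by simpa using h1, by simpa [sub_eq_self] using h1, fun h => h2 ?_⟩
  have : j + (1 + 1) = j := by rw [← add_assoc, ← h, sub_add_cancel]
  simpa using this

lemma sum_Dx_s11 {N : ℕ} [NeZero N] (hN : 3 ≤ N) (Δx : ℝ) (f : Fin N → ℝ) (j : Fin N) :
    ∑ i, Dx N Δx j i * f i = (f (j + 1) - f (j - 1)) / (2 * Δx) := by
  obtain ⟨-, -, h3⟩ := neighbours_ne hN j
  have : ∀ i, Dx N Δx j i * f i = (if i = j + 1 then 1 / (2 * Δx) * f i else 0)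
      + (if i = j - 1 then -(1 / (2 * Δx)) * f i else 0) := by
    intro i
    have hi : j = i + 1 ↔ i = j - 1 := by rw [eq_sub_iff_add_eq, eq_comm]
    simp only [Dx, Matrix.of_apply, hi]
    by_cases ha : i = j + 1
    · simp [ha, h3.symm]
    · by_cases hb : i = j - 1 <;> simp [ha, hb, h3]
  simp only [this, Finset.sum_add_distrib, Finset.sum_ite_eq', Finset.mem_univ, if_true]
  ring

lemma sum_Dxx_s11 {N : ℕ} [NeZero N] (hN : 3 ≤ N) (Δx : ℝ) (f : Fin N → ℝ) (j : Fin N) :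
    ∑ i, Dxx N Δx j i * f i = (f (j + 1) - 2 * f j + f (j - 1)) / (2 * Δx) := by
  obtain ⟨h1, h2, h3⟩ := neighbours_ne hN j
  have : ∀ i, Dxx N Δx j i * f i = (if i = j then -(1 / Δx) * f i else 0)
      + (if i = j + 1 then 1 / (2 * Δx) * f i else 0)
      + (if i = j - 1 then 1 / (2 * Δx) * f i else 0) := by
    intro i
    have hi : j = i + 1 ↔ i = j - 1 := by rw [eq_sub_iff_add_eq, eq_comm]
    simp only [Dxx, Matrix.of_apply, hi]
    by_cases h0 : i = j
    · simp [h0, h1.symm, h2.symm]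
    · by_cases ha : i = j + 1
      · simp [ha, h3.symm, h1]
      · by_cases hb : i = j - 1 <;> simp [h0, ha, hb, h3, h2]
  simp only [this, Finset.sum_add_distrib, Finset.sum_ite_eq', Finset.mem_univ, if_true]
  ring

open Matrix in
/-- The double sum of the scheme with the weight `1 / b` cleared: it is the stencil `D` applied
to the moment-mixed field `M u`. -/
lemma flux_sum {N n : ℕ} (D : Matrix (Fin N) (Fin N) ℝ) (M : Matrix (Fin n) (Fin n) ℝ)
    (b : ℝ) (hb : b ≠ 0) (B : Fin N → ℝ) (v : Fin N → Fin n → ℝ) (j : Fin N) (k : Fin n) :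
    b * ∑ i, ∑ ℓ, (1 / b) * D j i * B i * v i ℓ * M k ℓ
      = ∑ i, D j i * (M *ᵥ fun ℓ => B i * v i ℓ) k := by
  simp only [mulVec, dotProduct, Finset.mul_sum]
  refine Finset.sum_congr rfl fun i _ => Finset.sum_congr rfl fun ℓ _ => ?_
  field_simp

/-- Energy estimate for the conservative fully discrete g-update: under the CFL
condition `Δt ≤ Δx`, with `uⁿ = Bⁿ vⁿ`, the kinetic part of the energy grows at
most by the absorption–emission contribution. -/
theorem stmt_11 (Nx Nμ : ℕ) [NeZero Nx] [NeZero Nμ] (hNx : 3 ≤ Nx)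
    (Δx Δt σ : ℝ) (hΔx : 0 < Δx) (hΔt : 0 < Δt) (hCFL : Δt ≤ Δx) (hσ : 0 ≤ σ)
    (A absA : Matrix (Fin Nμ) (Fin Nμ) ℝ) (hA : A.IsSymm)
    (hspec : ∀ μ ∈ spectrum ℝ A, μ ∈ Set.Icc (-1 : ℝ) 1)
    (habs : absA.PosSemidef) (habs2 : absA * absA = A * A)
    (B0 B1 : Fin Nx → ℝ) (hB0 : ∀ j, 0 < B0 j)
    (v0 v1 : Fin Nx → Fin Nμ → ℝ)
    (hscheme : ∀ j k, v1 j k = v0 j k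
        - Δt * ∑ i : Fin Nx, ∑ ℓ : Fin Nμ,
            (1 / B0 j) * Dx Nx Δx j i * B0 i * v0 i ℓ * A k ℓ
        + Δt * ∑ i : Fin Nx, ∑ ℓ : Fin Nμ,
            (1 / B0 j) * Dxx Nx Δx j i * B0 i * v0 i ℓ * absA k ℓ
        + σ * Δt * (B1 j / B0 j) * (Real.sqrt 2 * (if k = 0 then (1 : ℝ) else 0) - v1 j k)
        - ((B1 j - B0 j) / B0 j) * v1 j k) :
    (1 / 2) * ∑ j : Fin Nx, ∑ k : Fin Nμ, (B1 j * v1 j k) ^ 2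
      ≤ (1 / 2) * ∑ j : Fin Nx, ∑ k : Fin Nμ, (B0 j * v0 j k) ^ 2
        + σ * Δt * ∑ j : Fin Nx, ∑ k : Fin Nμ,
            (B1 j) ^ 2 * v1 j k * (Real.sqrt 2 * (if k = 0 then (1 : ℝ) else 0) - v1 j k) := by
  obtain ⟨hm, hp, h1⟩ := abs_facts A absA hA hspec habs habs2
  set r : ℝ := Δt / Δx with hr
  have hr0 : 0 ≤ r := by positivity
  have hr1 : r ≤ 1 := (div_le_one hΔx).2 hCFL
  have hC₁ : (1 - r • absA).PosSemidef := by
    -- a convex combination of `1` and `1 - |A|`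
    have : 1 - r • absA = (1 - r) • (1 : Matrix (Fin Nμ) (Fin Nμ) ℝ) + r • (1 - absA) := by
      module
    rw [this]
    exact (Matrix.PosSemidef.one.smul (sub_nonneg.2 hr1)).add (h1.smul hr0)
  have hC₂ : ((r / 2) • (absA - A)).PosSemidef := hm.smul (by positivity)
  have hC₃ : ((r / 2) • (absA + A)).PosSemidef := hp.smul (by positivity)
  set u : Fin Nx → Fin Nμ → ℝ := fun j k => B0 j * v0 j k with hu
  set w : Fin Nx → Fin Nμ → ℝ := fun j =>
    (1 - r • absA).mulVec (u j) + ((r / 2) • (absA - A)).mulVec (u (j + 1))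
      + ((r / 2) • (absA + A)).mulVec (u (j - 1)) with hw
  have hcontr : ∑ j, ∑ k, w j k ^ 2 ≤ ∑ j, ∑ k, u j k ^ 2 := by
    simpa only [dotProduct, ← sq] using
      upwind_sq_le hC₁ hC₂ hC₃ (by module) u w fun j => rfl
  have hstep : ∀ j k, B1 j * v1 j k = w j k
      + σ * Δt * B1 j * (Real.sqrt 2 * (if k = 0 then (1 : ℝ) else 0) - v1 j k) := by
    intro j k
    have hb : B0 j ≠ 0 := (hB0 j).ne'
    have hx : B0 j * ∑ i, ∑ ℓ, (1 / B0 j) * Dx Nx Δx j i * B0 i * v0 i ℓ * A k ℓ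
        = (A.mulVec (u (j + 1)) k - A.mulVec (u (j - 1)) k) / (2 * Δx) :=
      (flux_sum _ A _ hb B0 v0 j k).trans (sum_Dx_s11 hNx Δx (fun i => A.mulVec (u i) k) j)
    have hxx : B0 j * ∑ i, ∑ ℓ, (1 / B0 j) * Dxx Nx Δx j i * B0 i * v0 i ℓ * absA k ℓ
        = (absA.mulVec (u (j + 1)) k - 2 * absA.mulVec (u j) k
            + absA.mulVec (u (j - 1)) k) / (2 * Δx) :=
      (flux_sum _ absA _ hb B0 v0 j k).trans
        (sum_Dxx_s11 hNx Δx (fun i => absA.mulVec (u i) k) j)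
    have hs := congrArg (B0 j * ·) (hscheme j k)
    simp only [mul_add, mul_sub, mul_left_comm (B0 j) Δt, hx, hxx] at hs
    have ha : ∀ y : ℝ, B0 j * (σ * Δt * (B1 j / B0 j) * y) = σ * Δt * B1 j * y := by
      intro y; field_simp
    have hd : B0 j * ((B1 j - B0 j) / B0 j * v1 j k) = (B1 j - B0 j) * v1 j k := by
      field_simp
    have hwk : w j k = u j k - r * absA.mulVec (u j) k
        + r / 2 * (absA.mulVec (u (j + 1)) k - A.mulVec (u (j + 1)) k)
        + r / 2 * (absA.mulVec (u (j - 1)) k + A.mulVec (u (j - 1)) k) := by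
      simp [hw, Matrix.sub_mulVec, Matrix.add_mulVec, Matrix.smul_mulVec, mul_add]
    have huk : u j k = B0 j * v0 j k := rfl
    rw [ha, ha, hd] at hs
    rw [hwk, huk, hr]
    linear_combination hs
  have hpt : ∀ j k, (1 / 2) * (B1 j * v1 j k) ^ 2 ≤ (1 / 2) * w j k ^ 2 + σ * Δt *
      ((B1 j) ^ 2 * v1 j k * (Real.sqrt 2 * (if k = 0 then (1 : ℝ) else 0) - v1 j k)) := by
    intro j k
    have h := congrArg (B1 j * v1 j k * ·) (hstep j k)
    nlinarith [sq_nonneg (B1 j * v1 j k - w j k)]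
  have hsum := Finset.sum_le_sum fun j (_ : j ∈ Finset.univ) =>
    Finset.sum_le_sum fun k (_ : k ∈ Finset.univ) => hpt j k
  simp only [Finset.sum_add_distrib, ← Finset.mul_sum] at hsum
  linarith
end

section
/- (Local mass conservation of the DLRA scheme.) Assume B^0_j > 0 for all j, σ ≥ 0, Δt > 0 and 1 + σΔt > 0. Suppose (v^1_0, B^1) ∈ ℝ^{N_x} × ℝ^{N_x} satisfies, for all j, the coupled zeroth-moment equations (B^1_j/B^0_j) v^1_{j0} = (1/(1+σΔt)) v^0_{j0} − (Δt/(1+σΔt)) Σ_{i,ℓ} (1/B^0_j) D^x_{ji} B^0_i v^0_{iℓ} A_{0ℓ} + (Δt/(1+σΔt)) Σ_{i,ℓ} (1/B^0_j) D^{xx}_{ji} B^0_i v^0_{iℓ} |A|_{0ℓ} + (√2 σΔt/(1+σΔt)) (B^1_j/B^0_j) and B^1_j/B^0_j = 1 + σΔt (B^1_j/B^0_j)(√2 v^1_{j0} − 2). Then for every j the discrete local conservation law holds: (1/Δt) ( √2 B^1_j v^1_{j0} + B^1_j − ( √2 B^0_j v^0_{j0} + B^0_j ) ) = − √2 Σ_{i=1}^{N_x}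 Σ_{ℓ=0}^{N_μ−1} D^x_{ji} B^0_i v^0_{iℓ} A_{0ℓ} + √2 Σ_{i=1}^{N_x} Σ_{ℓ=0}^{N_μ−1} D^{xx}_{ji} B^0_i v^0_{iℓ} |A|_{0ℓ}. -/
/-!
Multiplying the `v`-equation by `√2 (1 + σΔt)` produces, besides the transport terms, the
contributions `√2 σΔt (B¹/B⁰) v¹` on the left and `2 σΔt (B¹/B⁰)` on the right. Their difference is
`σΔt (B¹/B⁰)(√2 v¹ - 2)`, which the `B`-equation identifies with `B¹/B⁰ - 1`: what the moment
`v` loses through the source terms is exactly what `B` gains. Scaling by `B⁰/Δt`, the factor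
`1/B⁰` having been pulled out of the transport sums, gives the conservation law.
-/

open Finset

/-- Local mass conservation of the DLRA scheme: the coupled zeroth-moment
update equations imply the discrete local conservation law for the mass
`ρⁿ_j = √2 Bⁿ_j vⁿ_{j0} + Bⁿ_j`. -/
theorem stmt_15 (Nx Nμ : ℕ) [NeZero Nx] [NeZero Nμ] (hNx : 3 ≤ Nx)
    (Δx Δt σ : ℝ) (hΔx : 0 < Δx) (hΔt : 0 < Δt) (hσ : 0 ≤ σ)
    (hσΔt : 0 < 1 + σ * Δt)
    (A absA : Matrix (Fin Nμ) (Fin Nμ) ℝ) (hA : A.IsSymm)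
    (habs : absA.PosSemidef) (habs2 : absA * absA = A * A)
    (B0 B1 : Fin Nx → ℝ) (hB0 : ∀ j, 0 < B0 j)
    (v0 : Fin Nx → Fin Nμ → ℝ) (v10 : Fin Nx → ℝ)
    (hv10 : ∀ j, (B1 j / B0 j) * v10 j
        = (1 / (1 + σ * Δt)) * v0 j 0
          - (Δt / (1 + σ * Δt)) * ∑ i : Fin Nx, ∑ ℓ : Fin Nμ,
              (1 / B0 j) * Dx Nx Δx j i * B0 i * v0 i ℓ * A 0 ℓ
          + (Δt / (1 + σ * Δt)) * ∑ i : Fin Nx, ∑ ℓ : Fin Nμ,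
              (1 / B0 j) * Dxx Nx Δx j i * B0 i * v0 i ℓ * absA 0 ℓ
          + (Real.sqrt 2 * σ * Δt / (1 + σ * Δt)) * (B1 j / B0 j))
    (hB1eq : ∀ j, B1 j / B0 j
        = 1 + σ * Δt * (B1 j / B0 j) * (Real.sqrt 2 * v10 j - 2)) :
    ∀ j : Fin Nx,
      (1 / Δt) * (Real.sqrt 2 * B1 j * v10 j + B1 j
          - (Real.sqrt 2 * B0 j * v0 j 0 + B0 j))
        = - Real.sqrt 2 * ∑ i : Fin Nx, ∑ ℓ : Fin Nμ,
              Dx Nx Δx j i * B0 i * v0 i ℓ * A 0 ℓ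
          + Real.sqrt 2 * ∑ i : Fin Nx, ∑ ℓ : Fin Nμ,
              Dxx Nx Δx j i * B0 i * v0 i ℓ * absA 0 ℓ := by
  intro j
  have hv := hv10 j
  have hb := hB1eq j
  have hB := (hB0 j).ne'
  have hs : Real.sqrt 2 * Real.sqrt 2 = 2 := Real.mul_self_sqrt (by norm_num)
  -- The factor `1 / B⁰ⱼ` depends on neither summation index.
  have pull : ∀ (D : Matrix (Fin Nx) (Fin Nx) ℝ) (M : Matrix (Fin Nμ) (Fin Nμ) ℝ),
      ∑ i : Fin Nx, ∑ ℓ : Fin Nμ, (1 / B0 j) * D j i * B0 i * v0 i ℓ * M 0 ℓ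
        = (1 / B0 j) * ∑ i : Fin Nx, ∑ ℓ : Fin Nμ, D j i * B0 i * v0 i ℓ * M 0 ℓ := by
    intro D M
    simp only [Finset.mul_sum, mul_assoc]
  rw [pull, pull] at hv
  generalize (∑ i : Fin Nx, ∑ ℓ : Fin Nμ, Dx Nx Δx j i * B0 i * v0 i ℓ * A 0 ℓ) = S at hv ⊢
  generalize (∑ i : Fin Nx, ∑ ℓ : Fin Nμ, Dxx Nx Δx j i * B0 i * v0 i ℓ * absA 0 ℓ) = T at hv ⊢
  have hc := hσΔt.ne'
  have ht := hΔt.ne'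
  field_simp at hv hb ⊢
  -- `√2` times the `v`-equation plus the `B`-equation; `√2 * √2 = 2` matches the source terms.
  linear_combination Real.sqrt 2 * hv + hb + σ * Δt * B1 j * hs
end
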